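/- Let D'_1 have the first marginal of the distribution f'_2 under a power-law layer type distribution; equivalently D'_1 is a mixed binomial random variable, Bin(X'−2, q(X'))-distributed given X', where P(X' = x) = (x)_2 q(x) p(x)/P_{21}. Then as t → ∞, P(D'_1 = t) = (c' + o(1)) t^{−(α−2)/(1−β)}, where c' = a b^{(α−2)/(1−β)} (1−β)^{−1} P_{21}^{−1}. -/

import Mathlib

open MeasureTheory ProbabilityTheory Filter
open scoped ENNReal Topology Classical

noncomputable section

/-- The binomial probability mass function `Bin(x,y)(s)`. -/
def binP (x : ℕ) (y : ℝ) (s : ℕ) : ℝ := (x.choose s : ℝ) * y ^ s * (1 - y) ^ (x - s)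

/-- Convolution of (mass) functions on `ℕ`. -/
def conv (f g : ℕ → ℝ) (s : ℕ) : ℝ := ∑ i ∈ Finset.range (s + 1), f i * g (s - i)

/-- Iterated convolution power: `convPow f j` is the `j`-fold convolution of `f`. -/
def convPow (f : ℕ → ℝ) : ℕ → ℕ → ℝ
  | 0 => fun s => if s = 0 then 1 else 0
  | j + 1 => conv f (convPow f j)

/-- The compound Poisson probability mass function `CPoi(lam, f)`, i.e. the law of
`H_1 + ⋯ + H_Λ` where `Λ ~ Poi(lam)` and the `H_k` are i.i.d. with mass function `f`,
independent of `Λ`. -/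
def cpoi (lam : ℝ) (f : ℕ → ℝ) (s : ℕ) : ℝ :=
  ∑' j : ℕ, Real.exp (-lam) * lam ^ j / (j.factorial : ℝ) * convPow f j s

/-- Convolution of (mass) functions on `ℕ × ℕ`. -/
def conv2 (F G : ℕ → ℕ → ℝ) (s t : ℕ) : ℝ :=
  ∑ i ∈ Finset.range (s + 1), ∑ j ∈ Finset.range (t + 1), F i j * G (s - i) (t - j)

/-- Point mass at `(1,1)`, as a mass function on `ℕ × ℕ`. -/
def delta11 (s t : ℕ) : ℝ := if s = 1 ∧ t = 1 then 1 else 0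

/-- The cross moment `P_{rs} = E[(X)_r Y^s]` for the layer type distribution
`P(dx,dy) = p(dx) δ_{q(x)}(dy)`. -/
def mom (p q : ℕ → ℝ) (r s : ℕ) : ℝ :=
  ∑' x : ℕ, (x.descFactorial r : ℝ) * q x ^ s * p x

/-- The increment distribution `g(s) = ∫ Bin(x-1,y)(s) x P(dx,dy) / P₁₀` for
`P(dx,dy) = p(dx) δ_{q(x)}(dy)`. -/
def gInc (p q : ℕ → ℝ) (s : ℕ) : ℝ :=
  (∑' x : ℕ, (x : ℝ) * binP (x - 1) (q x) s * p x) / mom p q 1 0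

/-- The limiting degree distribution `\bar f₁ = CPoi(μ P₁₀, g)`. -/
def barf1 (mu : ℝ) (p q : ℕ → ℝ) (s : ℕ) : ℝ :=
  cpoi (mu * mom p q 1 0) (gInc p q) s

/-- The distribution `f₂'` of `(D₁', D₂')`:
`f₂'(s,t) = ∫ Bin(x-2,y)(s) Bin(x-2,y)(t) (x)₂ y P(dx,dy) / P₂₁` for
`P(dx,dy) = p(dx) δ_{q(x)}(dy)`. -/
def f2p (p q : ℕ → ℝ) (s t : ℕ) : ℝ :=
  (∑' x : ℕ, (x.descFactorial 2 : ℝ) * q x * binP (x - 2) (q x) s * binP (x - 2) (q x) t * p x) /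
    mom p q 2 1

/-- The limiting bidegree distribution `\bar f₂ = δ₍₁,₁₎ ∗ (\bar f₁ ⊗ \bar f₁) ∗ f₂'`,
i.e. the joint law of `(D₁*, D₂*) = (1 + D₁ + D₁', 1 + D₂ + D₂')` where `D₁`, `D₂`,
`(D₁', D₂')` are mutually independent, `D₁, D₂ ~ \bar f₁` and `(D₁', D₂') ~ f₂'`. -/
def barf2 (mu : ℝ) (p q : ℕ → ℝ) : ℕ → ℕ → ℝ :=
  conv2 (conv2 delta11 fun s t => barf1 mu p q s * barf1 mu p q t) (f2p p q)

/-- `δ_t = t^{1/2} ln⁴(2+t)`. -/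
def deltaFn (t : ℕ) : ℝ := Real.sqrt t * Real.log (2 + (t : ℝ)) ^ (4 : ℕ)

/-!
Up to the factor `P₂₁`, the mass of `D₁'` at `t` is `∑ w n * P(Bin(n, y n) = t)` with
`y n = q (n + 2)` and `w n = (n + 2) (n + 1) q (n + 2) p (n + 2)`. By Chernoff bounds only those `n`
contribute whose mean `n * y n` is within a constant factor close to `1` of `t`, and there
`w n / y n` is asymptotically `a b ^ γ t ^ (-γ)` with `γ = (α - 2) / (1 - β)`. It remains to see
that `∑ y n * P(Bin(n, y n) = t)` over this window tends to `1 / (1 - β)`. The sum telescopes: the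
step from `Bin(n, y n)` to `Bin(n + 1, y (n + 1))` lowers the distribution function at `t` by
`(1 - β + o(1)) * y n * P(Bin(n, y n) = t)`, where the extra trial contributes `1` and the smaller
success probability `-β`, and across the window the distribution function drops from nearly `1` to
nearly `0`.
-/

section Binomial

variable {n t : ℕ} {y z u s σ : ℝ} {F : Finset ℕ}

lemma binP_nonneg (hy0 : 0 ≤ y) (hy1 : y ≤ 1) : 0 ≤ binP n y t :=
  mul_nonneg (mul_nonneg (Nat.cast_nonneg _) (pow_nonneg hy0 _)) (pow_nonneg (sub_nonneg.2 hy1) _)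

lemma binP_eq_zero_of_lt (y : ℝ) (h : n < t) : binP n y t = 0 := by
  simp [binP, Nat.choose_eq_zero_of_lt h]

lemma binP_eq_eval_bernsteinPolynomial (n : ℕ) (y : ℝ) (t : ℕ) :
    binP n y t = (bernsteinPolynomial ℝ n t).eval y := by
  simp [binP, bernsteinPolynomial]

lemma binP_succ_succ (n : ℕ) (y : ℝ) (t : ℕ) :
    binP (n + 1) y (t + 1) = y * binP n y t + (1 - y) * binP n y (t + 1) := by
  unfold binP
  rw [Nat.choose_succ_succ, Nat.add_sub_add_right]
  push_cast
  rcases lt_or_ge t n with h | h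
  · obtain ⟨m, rfl⟩ := Nat.exists_eq_add_of_lt h
    rw [show t + m + 1 - t = m + 1 by omega, show t + m + 1 - (t + 1) = m by omega]
    ring
  · rw [Nat.choose_eq_zero_of_lt (Nat.lt_succ_of_le h)]
    push_cast
    ring

lemma hasSum_binP_mul_pow (n : ℕ) (y s : ℝ) :
    HasSum (fun k => binP n y k * s ^ k) ((1 + y * (s - 1)) ^ n) := by
  have hbinom : (1 + y * (s - 1)) ^ n = ∑ k ∈ Finset.range (n + 1), binP n y k * s ^ k := by
    rw [show 1 + y * (s - 1) = y * s + (1 - y) by ring, add_pow]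
    refine Finset.sum_congr rfl fun k _ => ?_
    rw [binP, mul_pow]
    ring
  rw [hbinom]
  refine hasSum_sum_of_ne_finset_zero fun k hk => ?_
  rw [binP_eq_zero_of_lt y (by simpa using hk), zero_mul]

lemma hasSum_binP (n : ℕ) (y : ℝ) : HasSum (binP n y) 1 := by
  simpa using hasSum_binP_mul_pow n y 1

lemma binP_le_one (hy0 : 0 ≤ y) (hy1 : y ≤ 1) : binP n y t ≤ 1 :=
  le_hasSum (hasSum_binP n y) t fun _ _ => binP_nonneg hy0 hy1

/-- The binomial distribution function `P(Bin(n, y) ≤ t)`. -/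
def binCdf (n : ℕ) (y : ℝ) (t : ℕ) : ℝ := ∑ k ∈ Finset.range (t + 1), binP n y k

lemma binCdf_nonneg (hy0 : 0 ≤ y) (hy1 : y ≤ 1) : 0 ≤ binCdf n y t :=
  Finset.sum_nonneg fun _ _ => binP_nonneg hy0 hy1

lemma binCdf_le_one (hy0 : 0 ≤ y) (hy1 : y ≤ 1) : binCdf n y t ≤ 1 :=
  sum_le_hasSum _ (fun _ _ => binP_nonneg hy0 hy1) (hasSum_binP n y)

lemma one_sub_binCdf (n : ℕ) (y : ℝ) (t : ℕ) :
    1 - binCdf n y t = ∑ k ∈ Finset.Ico (t + 1) (t + 1 + n), binP n y k := by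
  have htotal : ∑ k ∈ Finset.range (t + 1 + n), binP n y k = 1 :=
    (hasSum_sum_of_ne_finset_zero fun k hk => binP_eq_zero_of_lt y (by
      simp only [Finset.mem_range] at hk; omega)).unique (hasSum_binP n y)
  rw [binCdf, ← htotal, ← Finset.sum_range_add_sum_Ico _ (Nat.le_add_right (t + 1) n),
    add_sub_cancel_left]

lemma binCdf_succ_left (n : ℕ) (y : ℝ) (t : ℕ) :
    binCdf (n + 1) y t = binCdf n y t - y * binP n y t := by
  induction t with
  | zero =>
    simp only [binCdf, binP, zero_add, Finset.sum_range_one, Nat.choose_zero_right, pow_zero,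
      tsub_zero, pow_succ]
    ring
  | succ t ih =>
    rw [binCdf, Finset.sum_range_succ, ← binCdf, ih, binP_succ_succ, binCdf, binCdf,
      Finset.sum_range_succ _ (t + 1)]
    ring

lemma hasDerivAt_binP_succ_zero (n : ℕ) (y : ℝ) :
    HasDerivAt (fun y => binP (n + 1) y 0) (-((n + 1) * binP n y 0)) y := by
  simpa [binP] using ((hasDerivAt_id y).const_sub 1).fun_pow (n + 1)

lemma hasDerivAt_binP_succ_succ (n : ℕ) (y : ℝ) (t : ℕ) :
    HasDerivAt (fun y => binP (n + 1) y (t + 1))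
      ((n + 1) * (binP n y t - binP n y (t + 1))) y := by
  have h := (bernsteinPolynomial ℝ (n + 1) (t + 1)).hasDerivAt y
  rw [bernsteinPolynomial.derivative_succ] at h
  simpa [binP_eq_eval_bernsteinPolynomial] using h

lemma hasDerivAt_binCdf_succ (n : ℕ) (y : ℝ) (t : ℕ) :
    HasDerivAt (fun y => binCdf (n + 1) y t) (-((n + 1) * binP n y t)) y := by
  induction t with
  | zero => simpa [binCdf] using hasDerivAt_binP_succ_zero n y
  | succ t ih =>
    have hsplit : (fun y => binCdf (n + 1) y (t + 1)) =
        fun y => binCdf (n + 1) y t + binP (n + 1) y (t + 1) :=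
      funext fun y => Finset.sum_range_succ _ _
    rw [hsplit]
    exact (ih.add (hasDerivAt_binP_succ_succ n y t)).congr_deriv (by ring)

/- The step from `Bin(n, y)` to `Bin(n + 1, z)` first adds a trial, which lowers the distribution
function by `y * binP n y t`, and then lowers the success probability, which raises it by the mean
value theorem. -/
lemma exists_binCdf_sub_binCdf_succ_eq (n t : ℕ) (h : z ≤ y) :
    ∃ u ∈ Set.Icc z y, binCdf n y t - binCdf (n + 1) z t =
      y * binP n y t - (n + 1) * (y - z) * binP n u t := by
  have htrial := binCdf_succ_left n y t
  rcases h.eq_or_lt with rfl | hlt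
  · exact ⟨z, Set.left_mem_Icc.2 le_rfl, by linear_combination -htrial⟩
  · obtain ⟨u, hu, hslope⟩ := exists_hasDerivAt_eq_slope (fun y => binCdf (n + 1) y t)
      (fun y => -((n + 1) * binP n y t)) hlt
      (fun u _ => (hasDerivAt_binCdf_succ n u t).continuousAt.continuousWithinAt)
      (fun u _ => hasDerivAt_binCdf_succ n u t)
    rw [eq_div_iff (sub_ne_zero.2 hlt.ne')] at hslope
    exact ⟨u, Set.Ioo_subset_Icc_self hu, by linear_combination -htrial - hslope⟩

lemma binP_le_mul_exp (hu : 0 ≤ u) (huy : u ≤ y) (hy1 : y < 1) :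
    binP n u t ≤ binP n y t * Real.exp (n * (y - u) / (1 - y)) := by
  have hy : 0 < 1 - y := sub_pos.2 hy1
  have : 0 ≤ (y - u) / (1 - y) := div_nonneg (sub_nonneg.2 huy) hy.le
  have hbase : 1 - u ≤ (1 - y) * Real.exp ((y - u) / (1 - y)) :=
    calc 1 - u = (1 - y) * ((y - u) / (1 - y) + 1) := by field_simp; ring
      _ ≤ _ := by gcongr; exact Real.add_one_le_exp _
  have hpow : (1 - u) ^ (n - t) ≤ (1 - y) ^ (n - t) * Real.exp (n * (y - u) / (1 - y)) :=
    calc (1 - u) ^ (n - t) ≤ ((1 - y) * Real.exp ((y - u) / (1 - y))) ^ (n - t) :=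
          pow_le_pow_left₀ (by linarith) hbase _
      _ = (1 - y) ^ (n - t) * Real.exp ((n - t : ℕ) * ((y - u) / (1 - y))) := by
          rw [mul_pow, ← Real.exp_nat_mul]
      _ ≤ _ := by
          rw [mul_div_assoc]
          gcongr
          exact Nat.sub_le n t
  calc binP n u t ≤ n.choose t * y ^ t * ((1 - y) ^ (n - t) * Real.exp (n * (y - u) / (1 - y))) :=
        mul_le_mul (by gcongr) hpow (pow_nonneg (by linarith) _)
          (mul_nonneg (Nat.cast_nonneg _) (pow_nonneg (hu.trans huy) _))
    _ = _ := by rw [binP]; ring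

lemma binP_mul_one_sub_le (hu : 0 ≤ u) (huy : u ≤ y) (hy0 : 0 < y) (hy1 : y ≤ 1) :
    binP n y t * (1 - t * ((y - u) / y)) ≤ binP n u t := by
  have hbernoulli : 1 - t * ((y - u) / y) ≤ (u / y) ^ t := by
    have h := one_add_mul_sub_le_pow (a := u / y) (by have := div_nonneg hu hy0.le; linarith) t
    calc _ = 1 + t * (u / y - 1) := by field_simp; ring
      _ ≤ _ := h
  calc binP n y t * (1 - t * ((y - u) / y)) ≤ binP n y t * (u / y) ^ t :=
        mul_le_mul_of_nonneg_left hbernoulli (binP_nonneg hy0.le hy1)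
    _ = n.choose t * u ^ t * (1 - y) ^ (n - t) := by rw [binP, div_pow]; field_simp
    _ ≤ _ := by
        have : 0 ≤ 1 - y := sub_nonneg.2 hy1
        unfold binP
        gcongr

/- Markov's inequality for `s ^ Bin(n, y)`, with the bound `1 - 1 / s ≤ log s` keeping the exponent
rational in `s`. -/
lemma sum_binP_le_exp (hy0 : 0 ≤ y) (hy1 : y ≤ 1) (hs : 0 < s) (hF : ∀ k ∈ F, s ^ t ≤ s ^ k) :
    ∑ k ∈ F, binP n y k ≤ Real.exp ((s - 1) * (n * y - t / s)) := by
  have hpow : Real.exp (t * (1 - s⁻¹)) ≤ s ^ t := by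
    rw [Real.exp_nat_mul]
    gcongr
    exact (Real.le_log_iff_exp_le hs).1 (Real.one_sub_inv_le_log_of_pos hs)
  have hmgf : (1 + y * (s - 1)) ^ n ≤ Real.exp (n * (y * (s - 1))) := by
    rw [Real.exp_nat_mul, add_comm]
    exact pow_le_pow_left₀ (by nlinarith) (Real.add_one_le_exp _) n
  have hmarkov : (∑ k ∈ F, binP n y k) * s ^ t ≤ (1 + y * (s - 1)) ^ n :=
    calc (∑ k ∈ F, binP n y k) * s ^ t ≤ ∑ k ∈ F, binP n y k * s ^ k := by
          rw [Finset.sum_mul]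
          exact Finset.sum_le_sum fun k hk =>
            mul_le_mul_of_nonneg_left (hF k hk) (binP_nonneg hy0 hy1)
      _ ≤ _ := sum_le_hasSum F (fun k _ => mul_nonneg (binP_nonneg hy0 hy1) (by positivity))
          (hasSum_binP_mul_pow n y s)
  have hsum : 0 ≤ ∑ k ∈ F, binP n y k := Finset.sum_nonneg fun _ _ => binP_nonneg hy0 hy1
  calc ∑ k ∈ F, binP n y k ≤ Real.exp (n * (y * (s - 1))) / Real.exp (t * (1 - s⁻¹)) := by
        rw [le_div_iff₀ (Real.exp_pos _)]
        exact (mul_le_mul_of_nonneg_left hpow hsum).trans (hmarkov.trans hmgf)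
    _ = _ := by
        rw [← Real.exp_sub]
        congr 1
        field_simp

lemma sum_binP_le_exp_of_mean_le (hy0 : 0 ≤ y) (hy1 : y ≤ 1) (hσ : 1 < σ)
    (hmean : n * y ≤ t / σ ^ 2) (hF : ∀ k ∈ F, t ≤ k) :
    ∑ k ∈ F, binP n y k ≤ Real.exp (-((1 - σ⁻¹) ^ 2 * t)) := by
  have hσ0 : 0 < σ := by linarith
  refine (sum_binP_le_exp hy0 hy1 hσ0 fun k hk => pow_le_pow_right₀ hσ.le (hF k hk)).trans
    (Real.exp_le_exp.2 ?_)
  calc (σ - 1) * (n * y - t / σ) ≤ (σ - 1) * (t / σ ^ 2 - t / σ) := by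
        gcongr
    _ = _ := by field_simp; ring

lemma sum_binP_le_exp_of_le_mean (hy0 : 0 ≤ y) (hy1 : y ≤ 1) (hσ : 1 < σ)
    (hmean : σ ^ 2 * t ≤ n * y) (hF : ∀ k ∈ F, k ≤ t) :
    ∑ k ∈ F, binP n y k ≤ Real.exp (-((1 - σ⁻¹) ^ 2 * t)) := by
  have hσ0 : 0 < σ := by linarith
  have hinv : σ⁻¹ ≤ 1 := inv_le_one_of_one_le₀ hσ.le
  refine (sum_binP_le_exp hy0 hy1 (inv_pos.2 hσ0) fun k hk =>
    pow_le_pow_of_le_one (inv_pos.2 hσ0).le hinv (hF k hk)).trans (Real.exp_le_exp.2 ?_)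
  calc (σ⁻¹ - 1) * (n * y - t / σ⁻¹) ≤ (σ⁻¹ - 1) * (σ ^ 2 * t - t / σ⁻¹) :=
        mul_le_mul_of_nonpos_left (by linarith) (by linarith)
    _ = -((1 - σ⁻¹) ^ 2 * t) * σ ^ 2 := by field_simp; ring
    _ ≤ _ := mul_le_of_one_le_right (neg_nonpos.2 (by positivity)) (one_le_pow₀ hσ.le)

end Binomial

section Sequences

lemma tendsto_exp_neg_mul_mul_rpow {c : ℝ} (hc : 0 < c) (γ : ℝ) :
    Tendsto (fun t : ℕ => Real.exp (-(c * t)) * (t : ℝ) ^ γ) atTop (𝓝 0) :=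
  ((tendsto_rpow_mul_exp_neg_mul_atTop_nhds_zero γ c hc).comp
    (tendsto_natCast_atTop_atTop (R := ℝ))).congr fun t => by
      rw [Function.comp_apply, neg_mul, mul_comm]

lemma eventually_exists_crossing {m : ℕ → ℝ} (hmono : ∀ᶠ n in atTop, m n ≤ m (n + 1))
    (hstep : ∀ n, m (n + 1) ≤ m n + 1) (htop : Tendsto m atTop atTop) :
    ∀ᶠ r in atTop, ∃ L, (∀ n ≤ L, m n ≤ r) ∧ ∀ n ≥ L, r - 1 ≤ m n := by
  obtain ⟨N, hN⟩ := eventually_atTop.1 hmono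
  have hmonoOn : ∀ k n, N ≤ k → k ≤ n → m k ≤ m n := fun k n hk hkn =>
    Nat.le_induction le_rfl (fun j hj ih => ih.trans (hN j (hk.trans hj))) n hkn
  have hbound : ∀ᶠ r in atTop, ∀ k ∈ Set.Iic N, m k ≤ r :=
    (eventually_all_finite (Set.finite_Iic N)).2 fun k _ => eventually_ge_atTop (m k)
  filter_upwards [hbound] with r hr
  have hex : ∃ n, r < m n := (htop.eventually_gt_atTop r).exists
  have hNfind : N < Nat.find hex := by
    by_contra! h
    exact (hr _ h).not_gt (Nat.find_spec hex)
  obtain ⟨L, hL⟩ := Nat.exists_eq_add_of_lt hNfind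
  refine ⟨N + L, fun n hn => not_lt.1 (Nat.find_min hex (by omega)), fun n hn => ?_⟩
  have hcross : r < m (N + L + 1) := hL ▸ Nat.find_spec hex
  linarith [hstep (N + L), hmonoOn _ n (Nat.le_add_right N L) hn]

lemma exists_eventually_abs_mul_rpow_sub_le {m v : ℕ → ℝ} {γ A ε : ℝ} (hm : ∀ n, m n ≤ n)
    (hv : Tendsto (fun n => v n * m n ^ γ) atTop (𝓝 A)) (hε : 0 < ε) :
    ∃ σ : ℝ, 1 < σ ∧ ∀ᶠ t : ℕ in atTop, ∀ n, m n ∈ Set.Icc (t / σ ^ 3) (σ ^ 3 * t) →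
      |v n * (t : ℝ) ^ γ - A| ≤ ε := by
  have hcont : Tendsto (fun x : ℝ × ℝ => x.1 * x.2 ^ γ) (𝓝 A ×ˢ 𝓝 1) (𝓝 A) := by
    have h : ContinuousAt (fun x : ℝ × ℝ => x.1 * x.2 ^ γ) (A, 1) :=
      continuousAt_fst.mul (continuousAt_snd.rpow_const (Or.inl one_ne_zero))
    simpa [ContinuousAt, nhds_prod_eq] using h
  obtain ⟨P, hP, Q, hQ, hPQ⟩ :=
    eventually_prod_iff.1 (hcont.eventually (Metric.closedBall_mem_nhds A hε))
  have hcube : Tendsto (fun σ : ℝ => σ ^ 3) (𝓝[>] 1) (𝓝 1) := by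
    simpa using ((continuous_pow 3).tendsto (1 : ℝ)).mono_left nhdsWithin_le_nhds
  have hshrink : Tendsto (fun σ : ℝ => Set.Icc (σ ^ 3)⁻¹ (σ ^ 3)) (𝓝[>] 1) (𝓝 1).smallSets :=
    (by simpa using hcube.inv₀ one_ne_zero : Tendsto _ _ (𝓝 (1 : ℝ))).Icc hcube
  obtain ⟨σ, hσQ, hσ⟩ := ((tendsto_smallSets_iff.1 hshrink _ hQ).and self_mem_nhdsWithin).exists
  replace hσ : 1 < σ := hσ
  have hσ3 : 0 < σ ^ 3 := by positivity
  obtain ⟨N, hN⟩ := eventually_atTop.1 (hv.eventually hP)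
  refine ⟨σ, hσ, ?_⟩
  filter_upwards [eventually_gt_atTop 0,
    (tendsto_natCast_atTop_atTop.atTop_div_const hσ3).eventually_ge_atTop (N : ℝ)]
    with t ht hNt n hmem
  obtain ⟨hlo, hhi⟩ := hmem
  have ht0 : (0 : ℝ) < t := Nat.cast_pos.2 ht
  have hm0 : 0 < m n := (div_pos ht0 hσ3).trans_le hlo
  have hn : N ≤ n := Nat.cast_le.1 (hNt.trans (hlo.trans (hm n)))
  have hratio : t / m n ∈ Set.Icc (σ ^ 3)⁻¹ (σ ^ 3) := by
    constructor
    · rwa [le_div_iff₀ hm0, inv_mul_le_iff₀ hσ3]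
    · rwa [div_le_iff₀ hm0, ← div_le_iff₀' hσ3]
  have hrescale : v n * m n ^ γ * (t / m n) ^ γ = v n * (t : ℝ) ^ γ := by
    rw [mul_assoc, ← Real.mul_rpow hm0.le (by positivity), mul_div_cancel₀ _ hm0.ne']
  simpa only [Metric.mem_closedBall, Real.dist_eq, hrescale] using hPQ (hN n hn) (hσQ hratio)

lemma summable_of_tendsto_mul_rpow {f : ℕ → ℝ} {κ c : ℝ} (hκ : 1 < κ)
    (hf : Tendsto (fun n : ℕ => f n * (n : ℝ) ^ κ) atTop (𝓝 c)) : Summable f := by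
  refine summable_of_isBigO_nat (Real.summable_nat_rpow.2 (neg_lt_neg hκ)) ?_
  have h := (hf.isBigO_one ℝ).mul (Asymptotics.isBigO_refl (fun n : ℕ => (n : ℝ) ^ (-κ)) atTop)
  simp only [one_mul] at h
  refine h.congr' ?_ EventuallyEq.rfl
  filter_upwards [eventually_gt_atTop 0] with n hn
  have hn0 : (0 : ℝ) < n := Nat.cast_pos.2 hn
  rw [mul_assoc, ← Real.rpow_add hn0, add_neg_cancel, Real.rpow_zero, mul_one]

lemma tendsto_natCast_div_natCast_add (k : ℕ) :
    Tendsto (fun n : ℕ => (n : ℝ) / (n + k : ℕ)) atTop (𝓝 1) := by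
  simpa using tendsto_natCast_div_add_atTop (k : ℝ)

lemma tendsto_comp_add_mul_rpow {f : ℕ → ℝ} {κ c : ℝ} (k : ℕ)
    (hf : Tendsto (fun n : ℕ => f n * (n : ℝ) ^ κ) atTop (𝓝 c)) :
    Tendsto (fun n : ℕ => f (n + k) * (n : ℝ) ^ κ) atTop (𝓝 c) := by
  have hratio := (tendsto_natCast_div_natCast_add k).rpow_const (p := κ) (Or.inl one_ne_zero)
  have h := ((tendsto_add_atTop_iff_nat k).2 hf).mul hratio
  rw [Real.one_rpow, mul_one] at h
  refine h.congr' ?_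
  filter_upwards [eventually_gt_atTop 0] with n hn
  rw [mul_assoc, ← Real.mul_rpow (by positivity) (by positivity),
    mul_div_cancel₀ _ (by positivity)]

lemma tendsto_mul_one_sub_one_add_inv_rpow (β : ℝ) :
    Tendsto (fun n : ℕ => (n : ℝ) * (1 - (1 + (n : ℝ)⁻¹) ^ (-β))) atTop (𝓝 β) := by
  have hderiv : HasDerivAt (fun u : ℝ => u ^ (-β)) (-β) 1 := by
    simpa using Real.hasDerivAt_rpow_const (x := 1) (p := -β) (Or.inl one_ne_zero)
  have hinv : Tendsto (fun n : ℕ => (n : ℝ)⁻¹) atTop (𝓝[≠] 0) :=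
    tendsto_nhdsWithin_iff.2 ⟨tendsto_inv_atTop_nhds_zero_nat, by
      filter_upwards [eventually_ne_atTop 0] with n hn
      simpa using hn⟩
  have h := (hderiv.tendsto_slope_zero.comp hinv).neg
  rw [neg_neg] at h
  refine h.congr fun n => ?_
  simp only [Function.comp_apply, smul_eq_mul, inv_inv, Real.one_rpow]
  ring

end Sequences

/-- Success probabilities `y n` under which `Bin(n, y n)` behaves like `Bin(n, b * n ^ (-β))`: the
relative decrease from `y n` to `y (n + 1)` is `β / n` to leading order, and the means `n * y n`
diverge. The decrease condition is on consecutive values since `y n ~ b * n ^ (-β)` alone would not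
control it. -/
structure IsRegularThinning (y : ℕ → ℝ) (β : ℝ) : Prop where
  pos : ∀ n, 0 < y n
  le_one : ∀ n, y n ≤ 1
  antitone : Antitone y
  exists_lt_one : ∃ l : ℝ, l < 1 ∧ ∀ᶠ n in atTop, y n ≤ l
  tendsto_decrement : Tendsto (fun n : ℕ => n * (y n - y (n + 1))) atTop (𝓝 0)
  tendsto_relDecrement : Tendsto (fun n : ℕ => n * (1 - y (n + 1) / y n)) atTop (𝓝 β)
  tendsto_mean : Tendsto (fun n : ℕ => n * y n) atTop atTop

/-- The indices in `[L, U)` are, up to the factor `σ ^ 3`, those for which `Bin(n, y n)` has mean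
`t`, and the indices outside are separated from them by a factor `σ ^ 2`. -/
structure IsMeanWindow (y : ℕ → ℝ) (σ : ℝ) (t L U : ℕ) : Prop where
  le : L ≤ U
  mean_le : ∀ n ≤ L, n * y n ≤ t / σ ^ 2
  le_mean : ∀ n ≥ U, σ ^ 2 * t ≤ n * y n
  mean_mem : ∀ n ∈ Finset.Ico L U, n * y n ∈ Set.Icc (t / σ ^ 3) (σ ^ 3 * t)

namespace IsMeanWindow

variable {y w : ℕ → ℝ} {σ : ℝ} {t L U : ℕ}

lemma binP_le_exp (hW : IsMeanWindow y σ t L U) (hσ : 1 < σ) (hy0 : ∀ n, 0 ≤ y n)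
    (hy1 : ∀ n, y n ≤ 1) {n : ℕ} (hn : n ∉ Finset.Ico L U) :
    binP n (y n) t ≤ Real.exp (-((1 - σ⁻¹) ^ 2 * t)) := by
  rw [← Finset.sum_singleton (binP n (y n)) t]
  rcases lt_or_ge n L with hL | hL
  · exact sum_binP_le_exp_of_mean_le (hy0 n) (hy1 n) hσ (hW.mean_le n hL.le) (by simp)
  · refine sum_binP_le_exp_of_le_mean (hy0 n) (hy1 n) hσ (hW.le_mean n ?_) (by simp)
    by_contra! hU
    exact hn (Finset.mem_Ico.2 ⟨hL, hU⟩)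

lemma one_sub_exp_le_binCdf_sub_binCdf (hW : IsMeanWindow y σ t L U) (hσ : 1 < σ)
    (hy0 : ∀ n, 0 ≤ y n) (hy1 : ∀ n, y n ≤ 1) :
    1 - 2 * Real.exp (-((1 - σ⁻¹) ^ 2 * t)) ≤ binCdf L (y L) t - binCdf U (y U) t := by
  have hlower : 1 - binCdf L (y L) t ≤ Real.exp (-((1 - σ⁻¹) ^ 2 * t)) := by
    rw [one_sub_binCdf]
    exact sum_binP_le_exp_of_mean_le (hy0 L) (hy1 L) hσ (hW.mean_le L le_rfl) fun k hk => by
      simp only [Finset.mem_Ico] at hk; omega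
  have hupper : binCdf U (y U) t ≤ Real.exp (-((1 - σ⁻¹) ^ 2 * t)) :=
    sum_binP_le_exp_of_le_mean (hy0 U) (hy1 U) hσ (hW.le_mean U le_rfl) fun k hk => by
      simp only [Finset.mem_range] at hk; omega
  linarith

lemma abs_tsum_mul_binP_sub_sum_le (hW : IsMeanWindow y σ t L U) (hσ : 1 < σ)
    (hy0 : ∀ n, 0 ≤ y n) (hy1 : ∀ n, y n ≤ 1) (hw0 : ∀ n, 0 ≤ w n) (hw : Summable w) :
    |∑' n, w n * binP n (y n) t - ∑ n ∈ Finset.Ico L U, w n * binP n (y n) t| ≤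
      Real.exp (-((1 - σ⁻¹) ^ 2 * t)) * ∑' n, w n := by
  have hnonneg : ∀ n, 0 ≤ w n * binP n (y n) t := fun n =>
    mul_nonneg (hw0 n) (binP_nonneg (hy0 n) (hy1 n))
  have hsum : Summable fun n => w n * binP n (y n) t :=
    hw.of_nonneg_of_le hnonneg fun n =>
      mul_le_of_le_one_right (hw0 n) (binP_le_one (hy0 n) (hy1 n))
  have hwindow := hsum.sum_add_tsum_subtype_compl (Finset.Ico L U)
  have hcompl : ∑' n : {n // n ∉ Finset.Ico L U}, w n * binP n (y n) t ≤
      ∑' n : {n // n ∉ Finset.Ico L U}, Real.exp (-((1 - σ⁻¹) ^ 2 * t)) * w n :=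
    (hsum.subtype _).tsum_le_tsum (fun n => by
      rw [mul_comm]
      exact mul_le_mul_of_nonneg_right (hW.binP_le_exp hσ hy0 hy1 n.2) (hw0 n))
      ((hw.mul_left _).subtype _)
  have hdrop := (hw.mul_left (Real.exp (-((1 - σ⁻¹) ^ 2 * t)))).tsum_subtype_le _
    {n | n ∉ Finset.Ico L U} fun n => mul_nonneg (Real.exp_pos _).le (hw0 n)
  rw [← hwindow, add_sub_cancel_left, ← tsum_mul_left,
    abs_of_nonneg (tsum_nonneg fun n : {n // n ∉ Finset.Ico L U} => hnonneg n)]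
  exact hcompl.trans hdrop

end IsMeanWindow

namespace IsRegularThinning

variable {y w : ℕ → ℝ} {β σ : ℝ}

lemma nonneg (hy : IsRegularThinning y β) (n : ℕ) : 0 ≤ y n :=
  (hy.pos n).le

lemma tendsto_succ_mul_relDecrement (hy : IsRegularThinning y β) :
    Tendsto (fun n : ℕ => (n + 1) * (1 - y (n + 1) / y n)) atTop (𝓝 β) := by
  have h := hy.tendsto_relDecrement.mul ((tendsto_natCast_div_natCast_add 1).inv₀ one_ne_zero)
  rw [inv_one, mul_one] at h
  refine h.congr' ?_
  filter_upwards [eventually_ne_atTop 0] with n hn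
  have : (n : ℝ) ≠ 0 := Nat.cast_ne_zero.2 hn
  push_cast
  field_simp

lemma eventually_mean_le_succ (hy : IsRegularThinning y β) (hβ : β < 1) :
    ∀ᶠ n : ℕ in atTop, n * y n ≤ (n + 1 : ℕ) * y (n + 1) := by
  filter_upwards [hy.tendsto_succ_mul_relDecrement.eventually_le_const hβ] with n hn
  have hyn := hy.pos n
  calc n * y n = y n * (n + 1 - 1) := by ring
    _ ≤ y n * (n + 1 - (n + 1) * (1 - y (n + 1) / y n)) := by gcongr
    _ = _ := by push_cast; field_simp; ring

lemma mean_succ_le (hy : IsRegularThinning y β) (n : ℕ) :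
    (n + 1 : ℕ) * y (n + 1) ≤ n * y n + 1 := by
  have hanti := mul_le_mul_of_nonneg_left (hy.antitone n.le_succ) n.cast_nonneg
  push_cast
  linarith [hy.le_one (n + 1)]

lemma exists_isMeanWindow (hy : IsRegularThinning y β) (hβ : β < 1) (hσ : 1 < σ) :
    ∃ L U : ℕ → ℕ, ∀ᶠ t in atTop, IsMeanWindow y σ t (L t) (U t) := by
  have hσ0 : 0 < σ := by linarith
  have hcross := eventually_exists_crossing (hy.eventually_mean_le_succ hβ) hy.mean_succ_le
    hy.tendsto_mean
  have hcast : Tendsto (fun t : ℕ => (t : ℝ)) atTop atTop := tendsto_natCast_atTop_atTop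
  have hlo : Tendsto (fun t : ℕ => t / σ ^ 2) atTop atTop := hcast.atTop_div_const (by positivity)
  have hhi : Tendsto (fun t : ℕ => σ ^ 2 * t + 1) atTop atTop :=
    tendsto_atTop_add_const_right _ _ (hcast.const_mul_atTop (by positivity))
  suffices h : ∀ᶠ t in atTop, ∃ L U, IsMeanWindow y σ t L U by
    obtain ⟨L, hL⟩ := h.choice
    exact ⟨L, hL.choice⟩
  filter_upwards [hlo.eventually hcross, hhi.eventually hcross, eventually_gt_atTop 0,
    hcast.eventually_ge_atTop (σ ^ 3 / (σ - 1))] with t hL hU ht htσ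
  obtain ⟨L, hL1, hL2⟩ := hL
  obtain ⟨U, hU1, hU2⟩ := hU
  have ht0 : (0 : ℝ) < t := Nat.cast_pos.2 ht
  have hslack : σ ^ 3 ≤ t * (σ - 1) := (div_le_iff₀ (sub_pos.2 hσ)).1 htσ
  have hσ2 : 1 ≤ σ ^ 2 := one_le_pow₀ hσ.le
  refine ⟨L, U, ?_, hL1, fun n hn => by linarith [hU2 n hn], fun n hn => ?_⟩
  · by_contra! hUL
    have hcontra : σ ^ 2 * t ≤ t / σ ^ 2 := by linarith [hL1 U hUL.le, hU2 U le_rfl]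
    rw [le_div_iff₀ (by positivity)] at hcontra
    nlinarith [mul_pos (mul_pos (sub_pos.2 hσ) hσ0) ht0]
  · obtain ⟨hLn, hnU⟩ := Finset.mem_Ico.1 hn
    constructor
    · have : (t : ℝ) / σ ^ 3 ≤ t / σ ^ 2 - 1 := by
        field_simp
        linarith
      linarith [hL2 n hLn]
    · have hslack1 : 1 ≤ t * (σ - 1) := (one_le_pow₀ hσ.le).trans hslack
      have : σ ^ 2 * t + 1 ≤ σ ^ 3 * t := by
        linarith [mul_le_mul hσ2 hslack1 zero_le_one (by positivity)]
      linarith [hU1 n hnU.le]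

lemma eventually_abs_binP_sub_le (hy : IsRegularThinning y β) (C : ℝ) {ε : ℝ} (hε : 0 < ε) :
    ∀ᶠ n : ℕ in atTop, ∀ t : ℕ, t ≤ C * (n * y n) → ∀ u ∈ Set.Icc (y (n + 1)) (y n),
      |binP n u t - binP n (y n) t| ≤ ε * binP n (y n) t := by
  obtain ⟨l, hl, hyl⟩ := hy.exists_lt_one
  have hupper : Tendsto (fun n : ℕ => Real.exp (n * (y n - y (n + 1)) / (1 - l))) atTop (𝓝 1) := by
    simpa using (hy.tendsto_decrement.div_const (1 - l)).rexp
  have hlower : Tendsto (fun n : ℕ => C * (n * (y n - y (n + 1)))) atTop (𝓝 0) := by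
    simpa using hy.tendsto_decrement.const_mul C
  filter_upwards [hyl, hupper.eventually_le_const (lt_add_of_pos_right 1 hε),
    hlower.eventually_le_const hε] with n hn hexp hlin t ht u ⟨hzu, huy⟩
  have hy0 := hy.pos n
  have hu : 0 ≤ u := (hy.nonneg (n + 1)).trans hzu
  have hpmf : 0 ≤ binP n (y n) t := binP_nonneg hy0.le (hy.le_one n)
  have hhi : Real.exp (n * (y n - u) / (1 - y n)) ≤ 1 + ε := by
    have : 0 < 1 - l := sub_pos.2 hl
    refine le_trans ?_ hexp
    gcongr
    exact mul_nonneg n.cast_nonneg (sub_nonneg.2 (huy.trans' hzu))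
  have hlo : t * ((y n - u) / y n) ≤ ε :=
    calc t * ((y n - u) / y n) ≤ C * (n * y n) * ((y n - u) / y n) :=
          mul_le_mul_of_nonneg_right ht (div_nonneg (sub_nonneg.2 huy) hy0.le)
      _ = (C * n) * (y n - u) := by field_simp
      _ ≤ (C * n) * (y n - y (n + 1)) := by
          have : 0 ≤ C * n := nonneg_of_mul_nonneg_left
            (by linarith [t.cast_nonneg (α := ℝ)] : 0 ≤ C * n * y n) hy0
          gcongr
      _ ≤ ε := by linarith
  rw [abs_le]
  constructor
  · linarith [binP_mul_one_sub_le (n := n) (t := t) hu huy hy0 (hy.le_one n),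
      mul_le_mul_of_nonneg_left hlo hpmf]
  · linarith [binP_le_mul_exp (n := n) (t := t) hu huy (hn.trans_lt hl),
      mul_le_mul_of_nonneg_left hhi hpmf]

lemma eventually_abs_binCdf_sub_sub_le (hy : IsRegularThinning y β) (C : ℝ) {ε : ℝ} (hε : 0 < ε) :
    ∀ᶠ n : ℕ in atTop, ∀ t : ℕ, t ≤ C * (n * y n) →
      |binCdf n (y n) t - binCdf (n + 1) (y (n + 1)) t - (1 - β) * (y n * binP n (y n) t)| ≤
        ε * (y n * binP n (y n) t) := by
  obtain ⟨η, hη, hηε⟩ : ∃ η > 0, |β| * η < ε :=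
    ⟨ε / (|β| + 1), by positivity, by
      rw [mul_div_assoc', div_lt_iff₀ (by positivity)]; nlinarith⟩
  have hκ := hy.tendsto_succ_mul_relDecrement
  have herror := (hκ.abs.mul_const η).add (hκ.const_sub β).abs
  rw [sub_self, abs_zero, add_zero] at herror
  filter_upwards [hy.eventually_abs_binP_sub_le C hη, herror.eventually_le_const hηε]
    with n hstable hn t ht
  obtain ⟨u, hu, hstep⟩ := exists_binCdf_sub_binCdf_succ_eq n t (hy.antitone n.le_succ)
  have hy0 := hy.pos n
  have hpmf : 0 ≤ binP n (y n) t := binP_nonneg hy0.le (hy.le_one n)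
  set κ : ℝ := (n + 1) * (1 - y (n + 1) / y n) with hκdef
  have hκy : (n + 1) * (y n - y (n + 1)) = y n * κ := by rw [hκdef]; field_simp
  calc |binCdf n (y n) t - binCdf (n + 1) (y (n + 1)) t - (1 - β) * (y n * binP n (y n) t)|
      = y n * |(β - κ) * binP n (y n) t - κ * (binP n u t - binP n (y n) t)| := by
        rw [hstep, hκy, ← abs_of_pos hy0, ← abs_mul, abs_of_pos hy0]
        ring_nf
    _ ≤ y n * (|β - κ| * binP n (y n) t + |κ| * (η * binP n (y n) t)) := by
        gcongr
        refine (abs_sub _ _).trans ?_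
        rw [abs_mul, abs_mul, abs_of_nonneg hpmf]
        gcongr
        exact hstable t ht u hu
    _ = (|κ| * η + |β - κ|) * (y n * binP n (y n) t) := by ring
    _ ≤ _ := by gcongr

lemma tendsto_binCdf_sub_binCdf (hy : IsRegularThinning y β) (hσ : 1 < σ) {L U : ℕ → ℕ}
    (hW : ∀ᶠ t in atTop, IsMeanWindow y σ t (L t) (U t)) :
    Tendsto (fun t => binCdf (L t) (y (L t)) t - binCdf (U t) (y (U t)) t) atTop (𝓝 1) := by
  have hrate : 0 < (1 - σ⁻¹) ^ 2 := pow_pos (sub_pos.2 (inv_lt_one_of_one_lt₀ hσ)) 2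
  have hlower : Tendsto (fun t : ℕ => 1 - 2 * Real.exp (-((1 - σ⁻¹) ^ 2 * t))) atTop (𝓝 1) := by
    simpa using ((tendsto_exp_neg_mul_mul_rpow hrate 0).const_mul 2).const_sub 1
  refine tendsto_of_tendsto_of_tendsto_of_le_of_le' hlower tendsto_const_nhds ?_ ?_
  · filter_upwards [hW] with t ht
    exact ht.one_sub_exp_le_binCdf_sub_binCdf hσ hy.nonneg hy.le_one
  · refine .of_forall fun t => ?_
    linarith [binCdf_le_one (n := L t) (t := t) (hy.nonneg (L t)) (hy.le_one _),
      binCdf_nonneg (n := U t) (t := t) (hy.nonneg (U t)) (hy.le_one _)]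

lemma isEquivalent_binCdf_sub_binCdf (hy : IsRegularThinning y β) (hβ : β < 1) (hσ : 1 < σ)
    {L U : ℕ → ℕ} (hW : ∀ᶠ t in atTop, IsMeanWindow y σ t (L t) (U t)) :
    Asymptotics.IsEquivalent atTop
      (fun t => binCdf (L t) (y (L t)) t - binCdf (U t) (y (U t)) t)
      (fun t => (1 - β) * ∑ n ∈ Finset.Ico (L t) (U t), y n * binP n (y n) t) := by
  have hσ3 : 0 < σ ^ 3 := by positivity
  have hβ' : 0 < 1 - β := sub_pos.2 hβ
  refine Asymptotics.IsLittleO.of_bound fun ε hε => ?_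
  obtain ⟨N, hN⟩ := eventually_atTop.1
    (hy.eventually_abs_binCdf_sub_sub_le (σ ^ 3) (mul_pos hε hβ'))
  filter_upwards [hW,
    (tendsto_natCast_atTop_atTop.atTop_div_const hσ3).eventually_ge_atTop (N : ℝ)] with t ht hNt
  have hterm : ∀ n, 0 ≤ y n * binP n (y n) t := fun n =>
    mul_nonneg (hy.nonneg n) (binP_nonneg (hy.nonneg n) (hy.le_one n))
  have htelescope : binCdf (L t) (y (L t)) t - binCdf (U t) (y (U t)) t =
      ∑ n ∈ Finset.Ico (L t) (U t), (binCdf n (y n) t - binCdf (n + 1) (y (n + 1)) t) :=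
    by
    rw [← neg_inj, ← Finset.sum_neg_distrib]
    simpa only [neg_sub] using (Finset.sum_Ico_sub (fun n => binCdf n (y n) t) ht.le).symm
  rw [Pi.sub_apply, htelescope, Finset.mul_sum, ← Finset.sum_sub_distrib, Real.norm_eq_abs,
    Real.norm_of_nonneg (Finset.sum_nonneg fun n _ => mul_nonneg hβ'.le (hterm n)),
    Finset.mul_sum]
  refine (Finset.abs_sum_le_sum_abs _ _).trans (Finset.sum_le_sum fun n hn => ?_)
  have hmean := (ht.mean_mem n hn).1
  have hn_large : N ≤ n := Nat.cast_le.1 <| hNt.trans <| hmean.trans <|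
    mul_le_of_le_one_right n.cast_nonneg (hy.le_one n)
  exact (hN n hn_large t ((div_le_iff₀' hσ3).1 hmean)).trans_eq (mul_assoc _ _ _)

lemma tendsto_sum_mul_binP (hy : IsRegularThinning y β) (hβ : β < 1) (hσ : 1 < σ)
    {L U : ℕ → ℕ} (hW : ∀ᶠ t in atTop, IsMeanWindow y σ t (L t) (U t)) :
    Tendsto (fun t => ∑ n ∈ Finset.Ico (L t) (U t), y n * binP n (y n) t) atTop
      (𝓝 (1 - β)⁻¹) := by
  have h := ((hy.isEquivalent_binCdf_sub_binCdf hβ hσ hW).tendsto_nhds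
    (hy.tendsto_binCdf_sub_binCdf hσ hW)).const_mul (1 - β)⁻¹
  simpa [inv_mul_cancel_left₀ (sub_pos.2 hβ).ne'] using h

lemma abs_sum_mul_binP_mul_sub_le (hy : IsRegularThinning y β) {x A ε : ℝ} {t : ℕ} {F : Finset ℕ}
    (hF : ∀ n ∈ F, |w n / y n * x - A| ≤ ε) :
    |(∑ n ∈ F, w n * binP n (y n) t) * x - A * ∑ n ∈ F, y n * binP n (y n) t| ≤
      ε * ∑ n ∈ F, y n * binP n (y n) t := by
  rw [Finset.sum_mul, Finset.mul_sum, Finset.mul_sum, ← Finset.sum_sub_distrib]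
  refine (Finset.abs_sum_le_sum_abs _ _).trans (Finset.sum_le_sum fun n hn => ?_)
  have hterm : 0 ≤ y n * binP n (y n) t :=
    mul_nonneg (hy.nonneg n) (binP_nonneg (hy.nonneg n) (hy.le_one n))
  have hfactor : w n * binP n (y n) t * x - A * (y n * binP n (y n) t) =
      (w n / y n * x - A) * (y n * binP n (y n) t) := by
    have := (hy.pos n).ne'
    field_simp
  rw [hfactor, abs_mul, abs_of_nonneg hterm]
  exact mul_le_mul_of_nonneg_right (hF n hn) hterm

theorem tendsto_tsum_mul_binP_mul_rpow (hy : IsRegularThinning y β) (hβ : β < 1)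
    (hw0 : ∀ n, 0 ≤ w n) (hw : Summable w) {γ A : ℝ}
    (hA : Tendsto (fun n : ℕ => w n / y n * (n * y n) ^ γ) atTop (𝓝 A)) :
    Tendsto (fun t : ℕ => (∑' n, w n * binP n (y n) t) * (t : ℝ) ^ γ) atTop
      (𝓝 (A * (1 - β)⁻¹)) := by
  have hβ' : 0 < 1 - β := sub_pos.2 hβ
  refine Metric.tendsto_nhds.2 fun ε hε => ?_
  obtain ⟨σ, hσ, hweight⟩ := exists_eventually_abs_mul_rpow_sub_le
    (fun n => mul_le_of_le_one_right n.cast_nonneg (hy.le_one n)) hA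
    (half_pos (mul_pos hε hβ'))
  obtain ⟨L, U, hW⟩ := hy.exists_isMeanWindow hβ hσ
  set S : ℕ → ℝ := fun t => ∑ n ∈ Finset.Ico (L t) (U t), y n * binP n (y n) t
  have hS : Tendsto S atTop (𝓝 (1 - β)⁻¹) := hy.tendsto_sum_mul_binP hβ hσ hW
  have hrate : 0 < (1 - σ⁻¹) ^ 2 := pow_pos (sub_pos.2 (inv_lt_one_of_one_lt₀ hσ)) 2
  have herror : Tendsto (fun t : ℕ =>
      Real.exp (-((1 - σ⁻¹) ^ 2 * t)) * (t : ℝ) ^ γ * (∑' n, w n) + ε * (1 - β) / 2 * S t +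
        |A * S t - A * (1 - β)⁻¹|) atTop (𝓝 (ε / 2)) := by
    have h := (((tendsto_exp_neg_mul_mul_rpow hrate γ).mul_const (∑' n, w n)).add
      (hS.const_mul (ε * (1 - β) / 2))).add ((hS.const_mul A).sub_const (A * (1 - β)⁻¹)).abs
    convert h using 2
    rw [sub_self, abs_zero]
    field_simp
    ring
  filter_upwards [hweight, hW, herror.eventually_lt_const (half_lt_self hε)]
    with t hweight hW herror
  refine lt_of_le_of_lt ?_ herror
  have htail := mul_le_mul_of_nonneg_right
    (hW.abs_tsum_mul_binP_sub_sum_le hσ hy.nonneg hy.le_one hw0 hw)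
    (Real.rpow_nonneg t.cast_nonneg γ)
  have hmain := hy.abs_sum_mul_binP_mul_sub_le (t := t)
    fun n hn => hweight n (hW.mean_mem n hn)
  rw [← abs_of_nonneg (Real.rpow_nonneg t.cast_nonneg γ), ← abs_mul,
    abs_of_nonneg (Real.rpow_nonneg t.cast_nonneg γ), sub_mul] at htail
  rw [Real.dist_eq]
  refine (abs_sub_le _ _ _).trans (add_le_add ((abs_sub_le _ _ _).trans
    (add_le_add (htail.trans_eq (by ring)) hmain)) le_rfl)

end IsRegularThinning

section PowerLaw

/-- The layer strength `q x = min{1, b x ^ (-β)}` as a function of the layer size `x`. -/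
def layerStrength (b β : ℝ) (x : ℕ) : ℝ := min 1 (b * (x : ℝ) ^ (-β))

variable {p : ℕ → ℝ} {a b α β : ℝ}

lemma layerStrength_nonneg (hb : 0 ≤ b) (β : ℝ) (x : ℕ) : 0 ≤ layerStrength b β x :=
  le_min zero_le_one (by positivity)

lemma layerStrength_pos (hb : 0 < b) (β : ℝ) {x : ℕ} (hx : 0 < x) : 0 < layerStrength b β x :=
  lt_min one_pos (by positivity)

lemma layerStrength_le_one (b β : ℝ) (x : ℕ) : layerStrength b β x ≤ 1 :=
  min_le_left _ _

lemma layerStrength_le_layerStrength (hb : 0 ≤ b) (hβ : 0 ≤ β) {x x' : ℕ} (hx : 0 < x)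
    (h : x ≤ x') : layerStrength b β x' ≤ layerStrength b β x :=
  min_le_min_left _ <| mul_le_mul_of_nonneg_left
    (Real.rpow_le_rpow_of_nonpos (Nat.cast_pos.2 hx) (Nat.cast_le.2 h) (neg_nonpos.2 hβ)) hb

lemma exists_tendsto_mul_rpow_neg (hβ : 0 ≤ β) (hb1 : β = 0 → b < 1) :
    ∃ l : ℝ, l < 1 ∧ β * l = 0 ∧ Tendsto (fun x : ℕ => b * (x : ℝ) ^ (-β)) atTop (𝓝 l) := by
  rcases hβ.eq_or_lt with rfl | hβ
  · exact ⟨b, hb1 rfl, zero_mul b, by simp⟩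
  · exact ⟨0, zero_lt_one, mul_zero β, by
      simpa using ((tendsto_rpow_neg_atTop hβ).comp tendsto_natCast_atTop_atTop).const_mul b⟩

lemma eventually_layerStrength_eq (hβ : 0 ≤ β) (hb1 : β = 0 → b < 1) :
    ∀ᶠ x : ℕ in atTop, layerStrength b β x = b * (x : ℝ) ^ (-β) := by
  obtain ⟨l, hl, -, hlim⟩ := exists_tendsto_mul_rpow_neg hβ hb1
  filter_upwards [hlim.eventually_le_const hl] with x hx using min_eq_right hx

lemma tendsto_layerStrength_mul_rpow (hβ : 0 ≤ β) (hb1 : β = 0 → b < 1) :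
    Tendsto (fun x : ℕ => layerStrength b β x * (x : ℝ) ^ β) atTop (𝓝 b) := by
  refine tendsto_const_nhds.congr' ?_
  filter_upwards [eventually_layerStrength_eq hβ hb1, eventually_gt_atTop 0] with x hx hx0
  rw [hx, mul_assoc, ← Real.rpow_add (Nat.cast_pos.2 hx0), neg_add_cancel, Real.rpow_zero, mul_one]

lemma tendsto_mul_one_sub_layerStrength_div (hb : b ≠ 0) (hβ : 0 ≤ β) (hb1 : β = 0 → b < 1) :
    Tendsto (fun x : ℕ => (x : ℝ) * (1 - layerStrength b β (x + 1) / layerStrength b β x)) atTop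
      (𝓝 β) := by
  refine (tendsto_mul_one_sub_one_add_inv_rpow β).congr' ?_
  have heq := eventually_layerStrength_eq hβ hb1
  filter_upwards [heq, (tendsto_add_atTop_nat 1).eventually heq, eventually_gt_atTop 0]
    with x hx hx1 hx0
  have : (0 : ℝ) < x := Nat.cast_pos.2 hx0
  rw [hx, hx1, mul_div_mul_left _ _ hb, ← Real.div_rpow (by positivity) (by positivity),
    Nat.cast_succ, add_div, div_self this.ne', one_div]

lemma tendsto_mul_one_sub_layerStrength_add_div (hb : b ≠ 0) (hβ : 0 ≤ β)
    (hb1 : β = 0 → b < 1) (k : ℕ) :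
    Tendsto (fun n : ℕ =>
      (n : ℝ) * (1 - layerStrength b β (n + 1 + k) / layerStrength b β (n + k))) atTop (𝓝 β) := by
  have h := ((tendsto_add_atTop_iff_nat k).2
    (tendsto_mul_one_sub_layerStrength_div hb hβ hb1)).mul (tendsto_natCast_div_natCast_add k)
  rw [mul_one] at h
  refine h.congr' ?_
  filter_upwards [eventually_gt_atTop 0] with n hn
  rw [add_right_comm n 1 k, mul_right_comm, mul_div_cancel₀ _ (by positivity)]

lemma tendsto_mul_layerStrength_add (hβ0 : 0 ≤ β) (hb1 : β = 0 → b < 1) (k : ℕ) :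
    Tendsto (fun n : ℕ => (n * layerStrength b β (n + k)) * (n : ℝ) ^ (β - 1)) atTop (𝓝 b) := by
  refine (tendsto_comp_add_mul_rpow k (tendsto_layerStrength_mul_rpow hβ0 hb1)).congr' ?_
  filter_upwards [eventually_gt_atTop 0] with n hn
  have hn0 : (n : ℝ) ≠ 0 := Nat.cast_ne_zero.2 hn.ne'
  rw [Real.rpow_sub_one hn0]
  field_simp

lemma isRegularThinning_layerStrength_add (hb : 0 < b) (hβ0 : 0 ≤ β) (hβ1 : β < 1)
    (hb1 : β = 0 → b < 1) {k : ℕ} (hk : 0 < k) :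
    IsRegularThinning (fun n => layerStrength b β (n + k)) β := by
  obtain ⟨l, hl, hβl, hlim⟩ := exists_tendsto_mul_rpow_neg hβ0 hb1
  have hstrength : Tendsto (fun n => layerStrength b β (n + k)) atTop (𝓝 l) :=
    (tendsto_add_atTop_iff_nat k).2
      (hlim.congr' ((eventually_layerStrength_eq hβ0 hb1).mono fun _ h => h.symm))
  have hrel := tendsto_mul_one_sub_layerStrength_add_div hb.ne' hβ0 hb1 k
  have hpos : ∀ n, 0 < layerStrength b β (n + k) := fun n =>
    layerStrength_pos hb β (hk.trans_le (Nat.le_add_left k n))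
  refine ⟨hpos, fun n => layerStrength_le_one b β _, fun m n hmn => ?_, ?_, ?_, hrel, ?_⟩
  · exact layerStrength_le_layerStrength hb.le hβ0 (hk.trans_le (Nat.le_add_left k m))
      (Nat.add_le_add_right hmn k)
  · obtain ⟨l', hll', hl'⟩ := exists_between hl
    exact ⟨l', hl', hstrength.eventually_le_const hll'⟩
  · have hdecrement := hrel.mul hstrength
    rw [hβl] at hdecrement
    refine hdecrement.congr fun n => ?_
    rw [mul_assoc, sub_mul, one_mul, div_mul_cancel₀ _ (hpos n).ne']
  · have hpow : Tendsto (fun n : ℕ => (n : ℝ) ^ (1 - β)) atTop atTop :=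
      (tendsto_rpow_atTop (sub_pos.2 hβ1)).comp tendsto_natCast_atTop_atTop
    refine ((tendsto_mul_layerStrength_add hβ0 hb1 k).pos_mul_atTop hb hpow).congr' ?_
    filter_upwards [eventually_gt_atTop 0] with n hn
    rw [mul_assoc, ← Real.rpow_add (Nat.cast_pos.2 hn), sub_add_sub_cancel, sub_self,
      Real.rpow_zero, mul_one]

lemma tendsto_descFactorial_two_mul_rpow
    (hp : Tendsto (fun x : ℕ => p x * (x : ℝ) ^ α) atTop (𝓝 a)) :
    Tendsto (fun n : ℕ => ((n + 2).descFactorial 2 * p (n + 2)) * (n : ℝ) ^ (α - 2)) atTop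
      (𝓝 a) := by
  have hratio := ((tendsto_natCast_div_natCast_add 2).mul
    (tendsto_natCast_div_natCast_add 1)).inv₀ (by norm_num)
  have h := hratio.mul (tendsto_comp_add_mul_rpow 2 hp)
  rw [mul_one, inv_one, one_mul] at h
  refine h.congr' ?_
  filter_upwards [eventually_gt_atTop 0] with n hn
  have hn0 : (n : ℝ) ≠ 0 := Nat.cast_ne_zero.2 hn.ne'
  rw [Real.rpow_sub (Nat.cast_pos.2 hn), Real.rpow_two]
  simp only [Nat.descFactorial_succ, Nat.descFactorial_zero, tsub_zero, mul_one,
    Nat.add_succ_sub_one]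
  push_cast
  field_simp

/-- The edge-biased layer size weight `(x)₂ q(x) p(x) = P₂₁ P(X' = x)` at `x = n + 2`, indexed by
the number `n = x - 2` of trials of the binomial law of `D₁'` given `X' = x`. -/
def edgeWeight (p q : ℕ → ℝ) (n : ℕ) : ℝ :=
  (n + 2).descFactorial 2 * q (n + 2) * p (n + 2)

lemma edgeWeight_nonneg {q : ℕ → ℝ} (hp : ∀ x, 0 ≤ p x) (hq : ∀ x, 0 ≤ q x) (n : ℕ) :
    0 ≤ edgeWeight p q n :=
  mul_nonneg (mul_nonneg (Nat.cast_nonneg _) (hq _)) (hp _)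

lemma summable_edgeWeight (hβ : 0 ≤ β) (hb1 : β = 0 → b < 1) (hαβ : 3 < α + β)
    (hp : Tendsto (fun x : ℕ => p x * (x : ℝ) ^ α) atTop (𝓝 a)) :
    Summable (edgeWeight p (layerStrength b β)) := by
  refine summable_of_tendsto_mul_rpow (κ := α - 2 + β) (c := a * b) (by linarith) ?_
  refine ((tendsto_descFactorial_two_mul_rpow hp).mul
    (tendsto_comp_add_mul_rpow 2 (tendsto_layerStrength_mul_rpow hβ hb1))).congr' ?_
  filter_upwards [eventually_gt_atTop 0] with n hn
  rw [Real.rpow_add (Nat.cast_pos.2 hn), edgeWeight]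
  ring

lemma tendsto_edgeWeight_div_mul_rpow (hb : 0 < b) (hβ0 : 0 ≤ β) (hβ1 : β < 1)
    (hb1 : β = 0 → b < 1) (hp : Tendsto (fun x : ℕ => p x * (x : ℝ) ^ α) atTop (𝓝 a)) :
    Tendsto (fun n : ℕ => edgeWeight p (layerStrength b β) n / layerStrength b β (n + 2) *
      (n * layerStrength b β (n + 2)) ^ ((α - 2) / (1 - β))) atTop
      (𝓝 (a * b ^ ((α - 2) / (1 - β)))) := by
  have hβ' : 1 - β ≠ 0 := (sub_pos.2 hβ1).ne'
  refine ((tendsto_descFactorial_two_mul_rpow hp).mul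
    ((tendsto_mul_layerStrength_add hβ0 hb1 2).rpow_const (Or.inl hb.ne'))).congr' ?_
  filter_upwards [eventually_gt_atTop 0] with n hn
  have hn0 : (0 : ℝ) < n := Nat.cast_pos.2 hn
  have hq0 : 0 < layerStrength b β (n + 2) := layerStrength_pos hb β (by positivity)
  have hexp : (β - 1) * ((α - 2) / (1 - β)) = -(α - 2) := by field_simp; ring
  rw [Real.mul_rpow (by positivity) (by positivity), ← Real.rpow_mul hn0.le, hexp,
    Real.rpow_neg hn0.le, edgeWeight]
  field_simp

end PowerLaw

lemma tsum_tsum_mul_binP_mul_binP {w y : ℕ → ℝ} (hw0 : ∀ n, 0 ≤ w n) (hw : Summable w)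
    (hy0 : ∀ n, 0 ≤ y n) (hy1 : ∀ n, y n ≤ 1) (t : ℕ) :
    ∑' u, ∑' n, w n * binP n (y n) t * binP n (y n) u = ∑' n, w n * binP n (y n) t := by
  have hmarginal : ∀ n, HasSum (fun u => w n * binP n (y n) t * binP n (y n) u)
      (w n * binP n (y n) t) := fun n => by
    simpa using (hasSum_binP n (y n)).mul_left (w n * binP n (y n) t)
  have hpmf : ∀ n u, 0 ≤ binP n (y n) u := fun n u => binP_nonneg (hy0 n) (hy1 n)
  have hsum : Summable fun n => w n * binP n (y n) t :=
    hw.of_nonneg_of_le (fun n => mul_nonneg (hw0 n) (hpmf n t)) fun n =>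
      mul_le_of_le_one_right (hw0 n) (binP_le_one (hy0 n) (hy1 n))
  have hjoint : Summable (Function.uncurry fun n u => w n * binP n (y n) t * binP n (y n) u) :=
    (summable_prod_of_nonneg fun x => mul_nonneg (mul_nonneg (hw0 _) (hpmf _ _)) (hpmf _ _)).2
      ⟨fun n => (hmarginal n).summable, hsum.congr fun n => (hmarginal n).tsum_eq.symm⟩
  rw [hjoint.tsum_comm]
  exact tsum_congr fun n => (hmarginal n).tsum_eq

lemma f2p_eq_tsum_edgeWeight (p q : ℕ → ℝ) (t u : ℕ) :
    f2p p q t u = (∑' n, edgeWeight p q n * binP n (q (n + 2)) t * binP n (q (n + 2)) u) /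
      mom p q 2 1 := by
  rw [f2p, ← (add_left_injective 2).tsum_eq]
  · exact congrArg (· / mom p q 2 1) (tsum_congr fun n => by
      rw [edgeWeight, Nat.add_sub_cancel]; ring)
  · intro x hx
    have hx2 : 2 ≤ x := by
      by_contra! hlt
      exact hx (by simp only [Nat.descFactorial_of_lt hlt, Nat.cast_zero, zero_mul])
    exact ⟨x - 2, Nat.sub_add_cancel hx2⟩

lemma tsum_f2p {p q : ℕ → ℝ} (hp : ∀ x, 0 ≤ p x) (hq0 : ∀ x, 0 ≤ q x) (hq1 : ∀ x, q x ≤ 1)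
    (hw : Summable (edgeWeight p q)) (t : ℕ) :
    ∑' u, f2p p q t u = (∑' n, edgeWeight p q n * binP n (q (n + 2)) t) / mom p q 2 1 := by
  simp only [f2p_eq_tsum_edgeWeight]
  rw [tsum_div_const, tsum_tsum_mul_binP_mul_binP (edgeWeight_nonneg hp hq0) hw (fun _ => hq0 _)
    fun _ => hq1 _]

/-- **Tail of `D₁'` (eq. (eq:D1primeasymp) in the paper)**. Under the power-law layer type
distribution, the first marginal of `f₂'` (a mixed binomial law, `Bin(X'-2, q(X'))` given
`X'`, where `P(X' = x) = (x)₂ q(x) p(x)/P₂₁`) satisfies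
`P(D₁' = t) = (c' + o(1)) t^{-(α-2)/(1-β)}` with `c' = a b^{(α-2)/(1-β)} (1-β)⁻¹ P₂₁⁻¹`. -/
theorem f2p_marginal_tail
    (a b α β : ℝ) (ha : 0 < a) (hb : 0 < b)
    (hα : 2 < α) (hβ0 : 0 ≤ β) (hβ1 : β < 1) (hαβ : 3 < α + β)
    (hb1 : β = 0 → b < 1)
    (p : ℕ → ℝ) (hpnn : ∀ x, 0 ≤ p x) (hpsum : HasSum p 1)
    (hptail : Tendsto (fun x : ℕ => p x * (x : ℝ) ^ α) atTop (𝓝 a))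
    (q : ℕ → ℝ) (hq : ∀ x : ℕ, q x = min 1 (b * (x : ℝ) ^ (-β))) :
    Tendsto (fun t : ℕ => (∑' u : ℕ, f2p p q t u) * (t : ℝ) ^ ((α - 2) / (1 - β)))
      atTop (𝓝 (a * b ^ ((α - 2) / (1 - β)) * (1 - β)⁻¹ * (mom p q 2 1)⁻¹)) := by
  obtain rfl : q = layerStrength b β := funext hq
  have hw0 := edgeWeight_nonneg hpnn (layerStrength_nonneg hb.le β)
  have hw := summable_edgeWeight hβ0 hb1 hαβ hptail
  have hmain := (isRegularThinning_layerStrength_add hb hβ0 hβ1 hb1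
    two_pos).tendsto_tsum_mul_binP_mul_rpow hβ1 hw0 hw
    (tendsto_edgeWeight_div_mul_rpow hb hβ0 hβ1 hb1 hptail)
  refine (hmain.mul_const (mom p (layerStrength b β) 2 1)⁻¹).congr fun t => ?_
  rw [mul_right_comm, ← div_eq_mul_inv,
    ← tsum_f2p hpnn (layerStrength_nonneg hb.le β) (layerStrength_le_one b β) hw]
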